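/- For any two vectors v, w ∈ S, the real inner product ⟨v,w⟩_ℝ lies in the set {−1, −1/2, 0, 1/2, 1}; in particular 2⟨v,w⟩_ℝ is an integer for all v, w ∈ S. -/

import Mathlib

noncomputable section
open Real Complex

namespace Triacontagonal

/-- The golden ratio. -/
def τ : ℝ := (1 + Real.sqrt 5) / 2

/-- The constant 3^(-1/2) * 5^(-1/4). -/
def k0 : ℝ := (3 : ℝ) ^ (-(1:ℝ)/2) * (5 : ℝ) ^ (-(1:ℝ)/4)

/-- `a` is the positive real with 2a² = 1 + 3^(-1/2)·5^(-1/4)·τ^(3/2). -/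
def a : ℝ := Real.sqrt ((1 + k0 * τ ^ ((3:ℝ)/2)) / 2)

/-- `b` is the positive real with 2b² = 1 + 3^(-1/2)·5^(-1/4)·τ^(-3/2). -/
def b : ℝ := Real.sqrt ((1 + k0 * τ ^ (-((3:ℝ)/2))) / 2)

/-- `c` is the positive real with 2c² = 1 - 3^(-1/2)·5^(-1/4)·τ^(-3/2). -/
def c : ℝ := Real.sqrt ((1 - k0 * τ ^ (-((3:ℝ)/2))) / 2)

/-- `d` is the positive real with 2d² = 1 - 3^(-1/2)·5^(-1/4)·τ^(3/2). -/
def d : ℝ := Real.sqrt ((1 - k0 * τ ^ ((3:ℝ)/2)) / 2)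

/-- `cc n = 2 cos(nπ/30)`. -/
def cc (n : ℤ) : ℝ := 2 * Real.cos (n * Real.pi / 30)

/-- `ω = exp(iπ/30)`, a primitive 60th root of unity. -/
def ω : ℂ := Complex.exp (Real.pi * Complex.I / 30)

def r1 : ℝ := a / cc 9
def r2 : ℝ := b / cc 9
def r3 : ℝ := c / cc 9
def r4 : ℝ := d / cc 9
def r5 : ℝ := a / cc 3
def r6 : ℝ := b / cc 3
def r7 : ℝ := c / cc 3
def r8 : ℝ := d / cc 3

/-- The eight cycles of 30 vectors each in ℂ⁴. -/
def A (n : Fin 30) : Fin 4 → ℂ :=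
  ![(r1 : ℂ) * ω ^ (2 * (n : ℕ)), (r4 : ℂ) * ω ^ (22 * (n : ℕ)),
    (r6 : ℂ) * ω ^ (14 * (n : ℕ) + 1), (r7 : ℂ) * ω ^ (26 * (n : ℕ) + 1)]

def B (n : Fin 30) : Fin 4 → ℂ :=
  ![(r2 : ℂ) * ω ^ (2 * (n : ℕ) + 29), (r3 : ℂ) * ω ^ (22 * (n : ℕ) + 19),
    -((r8 : ℂ) * ω ^ (14 * (n : ℕ) + 24)), -((r5 : ℂ) * ω ^ (26 * (n : ℕ) + 18))]

def C (n : Fin 30) : Fin 4 → ℂ :=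
  ![(r3 : ℂ) * ω ^ (2 * (n : ℕ) + 29), -((r2 : ℂ) * ω ^ (22 * (n : ℕ) + 19)),
    (r5 : ℂ) * ω ^ (14 * (n : ℕ) + 24), -((r8 : ℂ) * ω ^ (26 * (n : ℕ) + 18))]

def D (n : Fin 30) : Fin 4 → ℂ :=
  ![(r4 : ℂ) * ω ^ (2 * (n : ℕ)), -((r1 : ℂ) * ω ^ (22 * (n : ℕ))),
    (r7 : ℂ) * ω ^ (14 * (n : ℕ) + 1), -((r6 : ℂ) * ω ^ (26 * (n : ℕ) + 1))]

def E (n : Fin 30) : Fin 4 → ℂ :=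
  ![(r5 : ℂ) * ω ^ (2 * (n : ℕ)), (r8 : ℂ) * ω ^ (22 * (n : ℕ)),
    -((r2 : ℂ) * ω ^ (14 * (n : ℕ) + 1)), -((r3 : ℂ) * ω ^ (26 * (n : ℕ) + 1))]

def F (n : Fin 30) : Fin 4 → ℂ :=
  ![(r6 : ℂ) * ω ^ (2 * (n : ℕ) + 29), (r7 : ℂ) * ω ^ (22 * (n : ℕ) + 19),
    (r4 : ℂ) * ω ^ (14 * (n : ℕ) + 24), (r1 : ℂ) * ω ^ (26 * (n : ℕ) + 18)]

def G (n : Fin 30) : Fin 4 → ℂ :=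
  ![(r7 : ℂ) * ω ^ (2 * (n : ℕ) + 29), -((r6 : ℂ) * ω ^ (22 * (n : ℕ) + 19)),
    -((r1 : ℂ) * ω ^ (14 * (n : ℕ) + 24)), (r4 : ℂ) * ω ^ (26 * (n : ℕ) + 18)]

def H (n : Fin 30) : Fin 4 → ℂ :=
  ![(r8 : ℂ) * ω ^ (2 * (n : ℕ)), -((r5 : ℂ) * ω ^ (22 * (n : ℕ))),
    -((r3 : ℂ) * ω ^ (14 * (n : ℕ) + 1)), (r2 : ℂ) * ω ^ (26 * (n : ℕ) + 1)]

/-- The set of the 240 vectors. -/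
def S : Set (Fin 4 → ℂ) :=
  {v | ∃ n : Fin 30, v = A n ∨ v = B n ∨ v = C n ∨ v = D n ∨
    v = E n ∨ v = F n ∨ v = G n ∨ v = H n}

/-- The real inner product on ℂ⁴: ⟨v,w⟩_ℝ = Re(Σᵢ vᵢ · conj(wᵢ)). -/
def rinner (v w : Fin 4 → ℂ) : ℝ := (∑ i, v i * star (w i)).re

/-- The associated Euclidean norm. -/
def enorm (v : Fin 4 → ℂ) : ℝ := Real.sqrt (rinner v v)

/-!
Let `T = diag(ω², ω²², ω¹⁴, ω²⁶)`, a Coxeter element of `E₈`. Each of the eight cycles is a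
`T`-orbit, and the first vectors of the cycles all lie in `ℤ[T, T⁻¹] · A 0`:
`B 0 = -(T⁵ + T⁻⁶) A 0`, `C 0 = (T² + T⁻² - 1) B 0`, `D 0 = (T⁴ + T⁻⁴ - 1) A 0`, and
`E 0, F 0, G 0, H 0` are the images of `A 0, B 0, C 0, D 0` under `T⁶ + T⁻⁶`. These identities come
from `a : b : c : d` being ratios of the numbers `2 cos(nπ/30)`. As `T` is unitary, integrality of
`2⟨v, w⟩` on `S` reduces to that of `g k = 2⟨Tᵏ A 0, A 0⟩`. The identity `T⁵ + T⁻⁵ = 1` gives the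
recurrence `g (k + 5) = g k - g (k - 5)`, while `T¹² + T⁻¹² + T⁶ + T⁻⁶ = -1` and the orthogonality
of `A 0` to `D 0`, `E 0` and `H 0` determine `g 0, …, g 5 = 2, 1, 1, 1, 1, 1`. All vectors of `S`
have norm `1`, so Cauchy–Schwarz leaves only the five half-integers in `[-1, 1]`.
-/

lemma mem_addSubgroup_of_apply_add_eq_sub {G : Type*} [AddGroup G] (Z : AddSubgroup G)
    {f : ℤ → G} {p : ℤ} (hp : 0 < p) (hf : ∀ k, f (k + p) = f k - f (k - p))
    (hZ : ∀ k ∈ Set.Ico (-p) p, f k ∈ Z) (k : ℤ) : f k ∈ Z := by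
  suffices hwindow : ∀ n : ℤ, ∀ j ∈ Set.Ico (n - p) (n + p), f j ∈ Z from
    hwindow k k ⟨by lia, by lia⟩
  intro n
  induction n with
  | zero => simpa using hZ
  | succ n ih =>
    rintro j ⟨hlo, hhi⟩
    obtain hj | rfl : j < n + p ∨ j = n + p := by lia
    · exact ih j ⟨by lia, hj⟩
    · rw [hf]
      exact Z.sub_mem (ih _ ⟨by lia, by lia⟩) (ih _ ⟨by lia, by lia⟩)
  | pred n ih =>
    rintro j ⟨hlo, hhi⟩
    obtain hj | rfl : -(n : ℤ) - p ≤ j ∨ j = -(n : ℤ) - 1 - p := by lia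
    · exact ih j ⟨hj, by lia⟩
    · have h := hf (-(n : ℤ) - 1)
      rw [eq_sub_iff_add_eq, ← eq_neg_add_iff_add_eq] at h
      rw [h]
      exact Z.add_mem (Z.neg_mem (ih _ ⟨by lia, by lia⟩)) (ih _ ⟨by lia, by lia⟩)

lemma mem_of_abs_le_one_of_two_mul_eq_intCast {x : ℝ} (hx : |x| ≤ 1) {m : ℤ} (hm : 2 * x = m) :
    x ∈ ({-1, -(1/2), 0, 1/2, 1} : Set ℝ) := by
  obtain ⟨hlo, hhi⟩ := abs_le.mp hx
  have hmlo : -2 ≤ m := by exact_mod_cast (by linarith : (-2 : ℝ) ≤ m)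
  have hmhi : m ≤ 2 := by exact_mod_cast (by linarith : (m : ℝ) ≤ 2)
  obtain rfl : x = m / 2 := by linarith
  interval_cases m <;> norm_num

/-! ### The real inner product -/

lemma rinner_eq_inner (v w : Fin 4 → ℂ) :
    rinner v w = inner ℝ (WithLp.toLp 2 v) (WithLp.toLp 2 w) := by
  simp [rinner, PiLp.inner_apply, Complex.inner, mul_comm]

lemma rinner_comm (v w : Fin 4 → ℂ) : rinner v w = rinner w v := by
  rw [rinner_eq_inner, rinner_eq_inner, real_inner_comm]

lemma rinner_add_left (u v w : Fin 4 → ℂ) : rinner (u + v) w = rinner u w + rinner v w := by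
  rw [rinner_eq_inner, WithLp.toLp_add, inner_add_left, ← rinner_eq_inner, ← rinner_eq_inner]

lemma rinner_neg_left (v w : Fin 4 → ℂ) : rinner (-v) w = -rinner v w := by
  rw [rinner_eq_inner, WithLp.toLp_neg, inner_neg_left, ← rinner_eq_inner]

lemma rinner_sub_left (u v w : Fin 4 → ℂ) : rinner (u - v) w = rinner u w - rinner v w := by
  rw [sub_eq_add_neg, rinner_add_left, rinner_neg_left, sub_eq_add_neg]

lemma abs_rinner_le_one {v w : Fin 4 → ℂ} (hv : rinner v v = 1) (hw : rinner w w = 1) :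
    |rinner v w| ≤ 1 := by
  rw [rinner_eq_inner, real_inner_self_eq_norm_sq,
    pow_eq_one_iff_of_nonneg (norm_nonneg _) two_ne_zero] at hv hw
  rw [rinner_eq_inner]
  simpa only [hv, hw, mul_one] using abs_real_inner_le_norm (WithLp.toLp 2 v) (WithLp.toLp 2 w)

/-! ### The numbers `cc n` -/

lemma cc_mul_cc (m n : ℤ) : cc m * cc n = cc (m + n) + cc (m - n) := by
  have hadd : ((m + n : ℤ) : ℝ) * π / 30 = m * π / 30 + n * π / 30 := by push_cast; ring
  have hsub : ((m - n : ℤ) : ℝ) * π / 30 = m * π / 30 - n * π / 30 := by push_cast; ring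
  rw [cc, cc, cc, cc, hadd, hsub, Real.cos_add, Real.cos_sub]
  ring

lemma cc_zero : cc 0 = 2 := by simp [cc]

lemma cc_neg (n : ℤ) : cc (-n) = cc n := by
  rw [cc, cc, ← Real.cos_neg]
  push_cast
  ring_nf

lemma cc_add_thirty (n : ℤ) : cc (n + 30) = -cc n := by
  have h : ((n + 30 : ℤ) : ℝ) * π / 30 = n * π / 30 + π := by push_cast; ring
  rw [cc, cc, h, Real.cos_add_pi, mul_neg]

lemma cc_eq_of_modEq {m n : ℤ} (h : m ≡ n [ZMOD 60]) : cc m = cc n := by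
  obtain ⟨k, hk⟩ := h.symm.dvd
  obtain rfl : m = n + 60 * k := by linarith
  have harg : ((n + 60 * k : ℤ) : ℝ) * π / 30 = n * π / 30 + k * (2 * π) := by push_cast; ring
  rw [cc, cc, harg, Real.cos_add_int_mul_two_pi]

lemma cc_eq_of_modEq_neg {m n : ℤ} (h : m ≡ -n [ZMOD 60]) : cc m = cc n :=
  (cc_eq_of_modEq h).trans (cc_neg n)

lemma cc_eq_neg_of_modEq_add_thirty {m n : ℤ} (h : m ≡ n + 30 [ZMOD 60]) : cc m = -cc n :=
  (cc_eq_of_modEq h).trans (cc_add_thirty n)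

lemma cc_eq_neg_of_modEq_thirty_sub {m n : ℤ} (h : m ≡ 30 - n [ZMOD 60]) : cc m = -cc n := by
  rw [cc_eq_of_modEq h, sub_eq_neg_add, cc_add_thirty, cc_neg]

lemma cc_sq (n : ℤ) : cc n ^ 2 = 2 + cc (2 * n) := by
  rw [sq, cc_mul_cc, sub_self, cc_zero, two_mul, add_comm]

lemma cc_pos {n : ℤ} (hn : |n| < 15) : 0 < cc n := by
  obtain ⟨hlo, hhi⟩ := abs_lt.mp hn
  have hlo' : (-15 : ℝ) < n := mod_cast hlo
  have hhi' : (n : ℝ) < 15 := mod_cast hhi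
  refine mul_pos two_pos (Real.cos_pos_of_mem_Ioo ⟨?_, ?_⟩) <;> nlinarith [Real.pi_pos]

lemma τ_pos : 0 < τ := Real.goldenRatio_pos

lemma τ_sq : τ ^ 2 = τ + 1 := Real.goldenRatio_sq

lemma cc_six : cc 6 = τ := by
  have h : ((6 : ℤ) : ℝ) * π / 30 = π / 5 := by push_cast; ring
  rw [cc, h, Real.cos_pi_div_five, τ]
  ring

lemma cc_ten : cc 10 = 1 := by
  have h : ((10 : ℤ) : ℝ) * π / 30 = π / 3 := by push_cast; ring
  rw [cc, h, Real.cos_pi_div_three]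
  norm_num

lemma cc_twelve : cc 12 = τ - 1 := by
  have h : cc 6 ^ 2 = 2 + cc 12 := cc_sq 6
  rw [cc_six, τ_sq] at h
  linarith

lemma cc_four_eq_cc_fourteen_add_τ : cc 4 = cc 14 + τ := by
  have h : cc 6 * cc 10 = cc 16 + cc (-4) := cc_mul_cc 6 10
  have h16 : cc 16 = -cc 14 := cc_eq_neg_of_modEq_thirty_sub (by decide)
  rw [cc_six, cc_ten, cc_neg] at h
  linarith

lemma cc_four_mul_cc_fourteen : cc 4 * cc 14 = 2 - τ := by
  have h : cc 4 * cc 14 = cc 18 + cc (-10) := cc_mul_cc 4 14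
  have h18 : cc 18 = -cc 12 := cc_eq_neg_of_modEq_thirty_sub (by decide)
  rw [cc_neg, cc_ten] at h
  linarith [cc_twelve]

lemma cc_two_eq_cc_eight_add_τ_sub_one : cc 2 = cc 8 + τ - 1 := by
  have h : cc 12 * cc 10 = cc 22 + cc 2 := cc_mul_cc 12 10
  have h22 : cc 22 = -cc 8 := cc_eq_neg_of_modEq_thirty_sub (by decide)
  rw [cc_twelve, cc_ten] at h
  linarith

lemma cc_three_sq : cc 3 ^ 2 = 2 + τ := by
  rw [← cc_six]
  exact cc_sq 3

lemma cc_nine_sq : cc 9 ^ 2 = 3 - τ := by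
  have h : cc 9 ^ 2 = 2 + cc 18 := cc_sq 9
  have h18 : cc 18 = -cc 12 := cc_eq_neg_of_modEq_thirty_sub (by decide)
  linarith [cc_twelve]

lemma cc_nine_eq_mul_cc_three : cc 9 = (τ - 1) * cc 3 := by
  have h : cc 12 * cc 3 = cc 15 + cc 9 := cc_mul_cc 12 3
  have h15 : cc 15 = 0 := self_eq_neg.mp (cc_eq_neg_of_modEq_thirty_sub (by decide))
  rw [← cc_twelve, h, h15, zero_add]

lemma cc_three_eq_mul_cc_nine : cc 3 = τ * cc 9 := by
  linear_combination (-τ) * cc_nine_eq_mul_cc_three - cc 3 * τ_sq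

lemma inv_cc_nine_sq_add_inv_cc_three_sq : (cc 9 ^ 2)⁻¹ + (cc 3 ^ 2)⁻¹ = 1 := by
  have h9 : cc 9 ≠ 0 := (cc_pos (by norm_num)).ne'
  have h3 : cc 3 ≠ 0 := (cc_pos (by norm_num)).ne'
  field_simp
  linear_combination (1 - cc 3 ^ 2) * cc_nine_sq + (τ - 2) * cc_three_sq + τ_sq

lemma cc_four_add_cc_fourteen_pos : 0 < cc 4 + cc 14 :=
  add_pos (cc_pos (by norm_num)) (cc_pos (by norm_num))

lemma cc_four_add_cc_fourteen_sq : (cc 4 + cc 14) ^ 2 = 3 * (3 - τ) := by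
  rw [add_sq', cc_four_eq_cc_fourteen_add_τ]
  linear_combination 4 * cc_four_mul_cc_fourteen - 4 * cc 14 * cc_four_eq_cc_fourteen_add_τ + τ_sq

/-! ### The numbers `a`, `b`, `c`, `d` -/

lemma k0_pos : 0 < k0 := by unfold k0; positivity

lemma k0_sq : k0 ^ 2 = (3 * √5)⁻¹ := by
  rw [k0, mul_pow, ← Real.rpow_mul_natCast (by norm_num), ← Real.rpow_mul_natCast (by norm_num),
    Real.sqrt_eq_rpow, mul_inv, ← Real.rpow_neg_one 3, ← Real.rpow_neg (by norm_num)]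
  norm_num

lemma k0_mul_τ_rpow_three_halves : k0 * τ ^ ((3 : ℝ) / 2) = τ / (cc 4 + cc 14) := by
  have hN := cc_four_add_cc_fourteen_pos
  have hk := k0_pos
  have hτ := τ_pos
  have hτ3 : (τ ^ ((3 : ℝ) / 2)) ^ 2 = τ ^ 3 := by
    rw [← Real.rpow_mul_natCast hτ.le, ← Real.rpow_natCast]
    norm_num
  have h5 : √5 = τ * (3 - τ) := by
    have h : √5 = 2 * τ - 1 := by rw [τ]; ring
    linear_combination h + τ_sq
  refine (sq_eq_sq₀ (by positivity) (by positivity)).mp ?_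
  have h3 : 0 < 3 - τ := by nlinarith [cc_four_add_cc_fourteen_sq]
  rw [mul_pow, hτ3, k0_sq, h5, div_pow, cc_four_add_cc_fourteen_sq]
  field_simp

lemma k0_mul_τ_rpow_neg_three_halves : k0 * τ ^ (-((3 : ℝ) / 2)) = (2 - τ) / (cc 4 + cc 14) := by
  have hτ := τ_pos
  have hrpow : τ ^ (-((3 : ℝ) / 2)) = τ ^ ((3 : ℝ) / 2) / τ ^ 3 := by
    rw [← Real.rpow_natCast, ← Real.rpow_sub hτ]
    norm_num
  have hinv : τ ^ 2 * (2 - τ) = 1 := by linear_combination (1 - τ) * τ_sq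
  have hN := cc_four_add_cc_fourteen_pos
  rw [hrpow, ← mul_div_assoc, k0_mul_τ_rpow_three_halves]
  field_simp
  linear_combination -hinv

lemma one_lt_cc_four : 1 < cc 4 := by
  nlinarith [cc_four_eq_cc_fourteen_add_τ, cc_four_mul_cc_fourteen,
    cc_pos (n := 14) (by norm_num), τ_sq, τ_pos]

lemma a_sq : a ^ 2 = cc 4 / (cc 4 + cc 14) := by
  have h4 : 0 < cc 4 := cc_pos (by norm_num)
  have hN := cc_four_add_cc_fourteen_pos
  have h : (1 + τ / (cc 4 + cc 14)) / 2 = cc 4 / (cc 4 + cc 14) := by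
    field_simp
    linear_combination -cc_four_eq_cc_fourteen_add_τ
  rw [a, k0_mul_τ_rpow_three_halves, h, Real.sq_sqrt (by positivity)]

lemma b_sq : b ^ 2 = (cc 14 + 1) / (cc 4 + cc 14) := by
  have h14 : 0 < cc 14 := cc_pos (by norm_num)
  have hN := cc_four_add_cc_fourteen_pos
  have h : (1 + (2 - τ) / (cc 4 + cc 14)) / 2 = (cc 14 + 1) / (cc 4 + cc 14) := by
    field_simp
    linear_combination cc_four_eq_cc_fourteen_add_τ
  rw [b, k0_mul_τ_rpow_neg_three_halves, h, Real.sq_sqrt (by positivity)]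

lemma c_sq : c ^ 2 = (cc 4 - 1) / (cc 4 + cc 14) := by
  have h4 : 0 < cc 4 - 1 := sub_pos.mpr one_lt_cc_four
  have hN := cc_four_add_cc_fourteen_pos
  have h : (1 - (2 - τ) / (cc 4 + cc 14)) / 2 = (cc 4 - 1) / (cc 4 + cc 14) := by
    field_simp
    linear_combination -cc_four_eq_cc_fourteen_add_τ
  rw [c, k0_mul_τ_rpow_neg_three_halves, h, Real.sq_sqrt (by positivity)]

lemma d_sq : d ^ 2 = cc 14 / (cc 4 + cc 14) := by
  have h14 : 0 < cc 14 := cc_pos (by norm_num)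
  have hN := cc_four_add_cc_fourteen_pos
  have h : (1 - τ / (cc 4 + cc 14)) / 2 = cc 14 / (cc 4 + cc 14) := by
    field_simp
    linear_combination cc_four_eq_cc_fourteen_add_τ
  rw [d, k0_mul_τ_rpow_three_halves, h, Real.sq_sqrt (by positivity)]

lemma a_sq_add_d_sq : a ^ 2 + d ^ 2 = 1 := by
  rw [a_sq, d_sq, ← add_div, div_self cc_four_add_cc_fourteen_pos.ne']

lemma b_sq_add_c_sq : b ^ 2 + c ^ 2 = 1 := by
  rw [b_sq, c_sq, ← add_div, div_eq_one_iff_eq cc_four_add_cc_fourteen_pos.ne']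
  ring

lemma eq_cc_mul_of_sq_eq (n : ℤ) {x y : ℝ} (hn : |n| < 15) (hx : 0 ≤ x) (hy : 0 ≤ y)
    (h : x ^ 2 = (2 + cc (2 * n)) * y ^ 2) : x = cc n * y := by
  refine (sq_eq_sq₀ hx (mul_nonneg (cc_pos hn).le hy)).mp ?_
  rw [h, mul_pow, cc_sq]

lemma a_eq_cc_seven_mul_c : a = cc 7 * c := by
  refine eq_cc_mul_of_sq_eq 7 (by norm_num) (Real.sqrt_nonneg _) (Real.sqrt_nonneg _) ?_
  change a ^ 2 = (2 + cc 14) * c ^ 2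
  rw [a_sq, c_sq, ← mul_div_assoc]
  congr 1
  linear_combination -cc_four_eq_cc_fourteen_add_τ - cc_four_mul_cc_fourteen

lemma b_eq_cc_eleven_mul_a : b = cc 11 * a := by
  refine eq_cc_mul_of_sq_eq 11 (by norm_num) (Real.sqrt_nonneg _) (Real.sqrt_nonneg _) ?_
  have h8 : cc 4 ^ 2 = 2 + cc 8 := cc_sq 4
  have h22 : cc 22 = 2 - cc 4 ^ 2 := by
    linarith [cc_eq_neg_of_modEq_thirty_sub (show 22 ≡ 30 - 8 [ZMOD 60] by decide)]
  change b ^ 2 = (2 + cc 22) * a ^ 2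
  rw [b_sq, a_sq, ← mul_div_assoc, h22]
  congr 1
  linear_combination (cc 4 ^ 2 + τ * cc 4 - 1) * cc_four_eq_cc_fourteen_add_τ +
    (cc 4 + τ) * cc_four_mul_cc_fourteen + (cc 4 - 1) * τ_sq

lemma c_eq_cc_one_mul_d : c = cc 1 * d := by
  refine eq_cc_mul_of_sq_eq 1 (by norm_num) (Real.sqrt_nonneg _) (Real.sqrt_nonneg _) ?_
  have h28 : cc 14 ^ 2 = 2 + cc 28 := cc_sq 14
  have h2 : cc 2 = 2 - cc 14 ^ 2 := by
    linarith [cc_eq_neg_of_modEq_thirty_sub (show 28 ≡ 30 - 2 [ZMOD 60] by decide)]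
  change c ^ 2 = (2 + cc 2) * d ^ 2
  rw [c_sq, d_sq, ← mul_div_assoc, h2]
  congr 1
  linear_combination (1 + τ * cc 14 - cc 14 ^ 2) * cc_four_eq_cc_fourteen_add_τ +
    (cc 14 - τ) * cc_four_mul_cc_fourteen + (cc 14 + 1) * τ_sq

lemma d_eq_cc_thirteen_mul_b : d = cc 13 * b := by
  refine eq_cc_mul_of_sq_eq 13 (by norm_num) (Real.sqrt_nonneg _) (Real.sqrt_nonneg _) ?_
  have h26 : cc 26 = -cc 4 := cc_eq_neg_of_modEq_thirty_sub (by decide)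
  change d ^ 2 = (2 + cc 26) * b ^ 2
  rw [d_sq, b_sq, ← mul_div_assoc, h26]
  congr 1
  linear_combination cc_four_mul_cc_fourteen + cc_four_eq_cc_fourteen_add_τ

lemma a_eq_mul_d : a = (cc 2 + 1) * d := by
  have h : cc 7 * cc 1 = cc 8 + cc 6 := cc_mul_cc 7 1
  rw [cc_two_eq_cc_eight_add_τ_sub_one, ← cc_six, a_eq_cc_seven_mul_c, c_eq_cc_one_mul_d]
  linear_combination d * h

lemma d_eq_mul_a : d = (cc 8 - 1) * a := by
  have h : cc 13 * cc 11 = cc 24 + cc 2 := cc_mul_cc 13 11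
  have h24 : cc 24 = -cc 6 := cc_eq_neg_of_modEq_thirty_sub (by decide)
  rw [cc_two_eq_cc_eight_add_τ_sub_one, h24, cc_six] at h
  rw [d_eq_cc_thirteen_mul_b, b_eq_cc_eleven_mul_a]
  linear_combination a * h

lemma b_eq_mul_c : b = (cc 14 + 1) * c := by
  have h : cc 11 * cc 7 = cc 18 + cc 4 := cc_mul_cc 11 7
  have h18 : cc 18 = -cc 12 := cc_eq_neg_of_modEq_thirty_sub (by decide)
  rw [cc_four_eq_cc_fourteen_add_τ, h18, cc_twelve] at h
  rw [b_eq_cc_eleven_mul_a, a_eq_cc_seven_mul_c]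
  linear_combination c * h

lemma c_eq_mul_b : c = (cc 4 - 1) * b := by
  have h : cc 1 * cc 13 = cc 14 + cc (-12) := cc_mul_cc 1 13
  rw [cc_neg, cc_twelve] at h
  rw [c_eq_cc_one_mul_d, d_eq_cc_thirteen_mul_b, cc_four_eq_cc_fourteen_add_τ]
  linear_combination b * h

lemma div_cc_three (x : ℝ) : x / cc 3 = (τ - 1) * (x / cc 9) := by
  have h9 : cc 9 ≠ 0 := (cc_pos (by norm_num)).ne'
  rw [cc_three_eq_mul_cc_nine, div_mul_eq_div_div]
  have hτ := τ_pos
  field_simp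
  linear_combination -x * τ_sq

lemma div_cc_nine (x : ℝ) : x / cc 9 = τ * (x / cc 3) := by
  rw [div_cc_three]
  linear_combination -(x / cc 9) * τ_sq

/-! ### The Coxeter element -/

lemma norm_ω : ‖ω‖ = 1 := by
  have h : (π : ℂ) * I / 30 = ((π / 30 : ℝ) : ℂ) * I := by push_cast; ring
  rw [ω, h, Complex.norm_exp_ofReal_mul_I]

lemma ω_ne_zero : ω ≠ 0 := Complex.exp_ne_zero _

lemma ω_pow_thirty : ω ^ 30 = -1 := by
  rw [ω, ← Complex.exp_nat_mul, ← Complex.exp_pi_mul_I]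
  congr 1
  push_cast
  ring

lemma ω_pow_eq_neg_zpow {m : ℕ} {k : ℤ} (h : (m : ℤ) = k + 30) : ω ^ m = -ω ^ k := by
  have h30 : ω ^ (30 : ℤ) = -1 := ω_pow_thirty
  rw [← zpow_natCast, h, zpow_add₀ ω_ne_zero, h30, mul_neg_one]

lemma ω_zpow_add_ω_zpow_neg (n : ℤ) : ω ^ n + ω ^ (-n) = cc n := by
  have h : (π : ℂ) * I / 30 * n = ((n * π / 30 : ℝ) : ℂ) * I := by push_cast; ring
  have hneg : -((n * π / 30 : ℝ) * I : ℂ) = -((n * π / 30 : ℝ) : ℂ) * I := by ring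
  rw [zpow_neg, ω, ← Complex.exp_int_mul, mul_comm, h, ← Complex.exp_neg, hneg, cc]
  push_cast
  rw [Complex.two_cos]

/-- The exponents of `E₈` up to negation modulo the Coxeter number `30`: the Coxeter element acts
on the `i`-th coordinate by `ω ^ (2 * coxeterExponent i)`. -/
def coxeterExponent : Fin 4 → ℤ := ![1, 11, 7, 13]

/-- The `k`-th power of the Coxeter element, a diagonal unitary matrix, as an element of the
ring `Fin 4 → ℂ`; it acts on `Fin 4 → ℂ` by multiplication. -/
def coxeter (k : ℤ) : Fin 4 → ℂ := fun i => ω ^ (2 * coxeterExponent i * k)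

lemma coxeter_zero : coxeter 0 = 1 := by
  ext i
  simp [coxeter]

lemma coxeter_add (k l : ℤ) : coxeter (k + l) = coxeter k * coxeter l := by
  ext i
  simp [coxeter, mul_add, zpow_add₀ ω_ne_zero]

lemma coxeter_add_coxeter_apply (k l : ℤ) (i : Fin 4) :
    coxeter k i + coxeter l i =
      cc (coxeterExponent i * (k - l)) * ω ^ (coxeterExponent i * (k + l)) := by
  rw [← ω_zpow_add_ω_zpow_neg, add_mul, ← zpow_add₀ ω_ne_zero, ← zpow_add₀ ω_ne_zero, coxeter,
    coxeter]
  ring_nf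

lemma star_coxeter (k : ℤ) : star (coxeter k) = coxeter (-k) := by
  ext i
  have h : star (ω ^ (2 * coxeterExponent i * k)) = (ω ^ (2 * coxeterExponent i * k))⁻¹ :=
    (Complex.inv_eq_conj (by rw [norm_zpow, norm_ω, one_zpow])).symm
  rw [Pi.star_apply, coxeter, h, coxeter, mul_neg, zpow_neg]

lemma rinner_coxeter_mul_left (k : ℤ) (v w : Fin 4 → ℂ) :
    rinner (coxeter k * v) w = rinner v (coxeter (-k) * w) := by
  simp only [rinner, ← star_coxeter, Pi.mul_apply, Pi.star_apply, star_mul', star_star]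
  congr 1
  exact Finset.sum_congr rfl fun i _ => by ring

lemma rinner_coxeter_mul_coxeter_mul (k l : ℤ) (v w : Fin 4 → ℂ) :
    rinner (coxeter k * v) (coxeter l * w) = rinner (coxeter (k - l) * v) w := by
  rw [sub_eq_neg_add, coxeter_add, mul_assoc, rinner_coxeter_mul_left (-l), neg_neg]

lemma rinner_coxeter_mul_self (k : ℤ) (v : Fin 4 → ℂ) :
    rinner (coxeter k * v) (coxeter k * v) = rinner v v := by
  rw [rinner_coxeter_mul_coxeter_mul, sub_self, coxeter_zero, one_mul]

/-- The vector with real coordinates `x` relative to the frame `z`. -/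
def framed (z : Fin 4 → ℂ) (x : Fin 4 → ℝ) : Fin 4 → ℂ := fun i => z i * x i

lemma framed_sub (z : Fin 4 → ℂ) (x y : Fin 4 → ℝ) :
    framed z (x - y) = framed z x - framed z y := by
  ext i
  simp [framed, mul_sub]

lemma framed_one_mul_framed (z : Fin 4 → ℂ) (t x : Fin 4 → ℝ) :
    framed 1 t * framed z x = framed z (t * x) := by
  ext i
  simp only [framed, Pi.mul_apply, Pi.one_apply, ofReal_mul]
  ring

lemma rinner_framed {z : Fin 4 → ℂ} (hz : ∀ i, ‖z i‖ = 1) (x y : Fin 4 → ℝ) :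
    rinner (framed z x) (framed z y) = ∑ i, x i * y i := by
  rw [rinner, Complex.re_sum]
  refine Finset.sum_congr rfl fun i _ => ?_
  have hconj : z i * star (z i) = 1 := by simp [Complex.mul_conj', hz]
  have h : framed z x i * star (framed z y i) = ((x i * y i : ℝ) : ℂ) := by
    simp only [framed, star_mul', Complex.star_def, Complex.conj_ofReal] at hconj ⊢
    push_cast
    linear_combination (x i * y i : ℂ) * hconj
  rw [h, Complex.ofReal_re]

lemma rinner_framed_self {z : Fin 4 → ℂ} (hz : ∀ i, ‖z i‖ = 1) (p q s t : ℝ) :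
    rinner (framed z ![p, q, s, t]) (framed z ![p, q, s, t]) = p ^ 2 + q ^ 2 + s ^ 2 + t ^ 2 := by
  rw [rinner_framed hz, Fin.sum_univ_four]
  change p * p + q * q + s * s + t * t = _
  ring

lemma coxeter_add_coxeter_neg {k : ℤ} {t : Fin 4 → ℝ}
    (ht : ∀ i, cc (2 * coxeterExponent i * k) = t i) :
    coxeter k + coxeter (-k) = framed 1 t := by
  ext i
  rw [Pi.add_apply, coxeter_add_coxeter_apply, add_neg_cancel, mul_zero, zpow_zero, mul_one,
    framed, ← ht, Pi.one_apply, one_mul]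
  ring_nf

lemma coxeter_two_add_coxeter_neg_two :
    coxeter 2 + coxeter (-2) = framed 1 ![cc 4, -cc 14, -cc 2, cc 8] := by
  refine coxeter_add_coxeter_neg fun i => ?_
  fin_cases i
  · rfl
  · exact cc_eq_neg_of_modEq_add_thirty (by decide)
  · exact cc_eq_neg_of_modEq_thirty_sub (by decide)
  · exact cc_eq_of_modEq_neg (by decide)

lemma coxeter_four_add_coxeter_neg_four :
    coxeter 4 + coxeter (-4) = framed 1 ![cc 8, -cc 2, cc 4, -cc 14] := by
  refine coxeter_add_coxeter_neg fun i => ?_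
  fin_cases i
  · rfl
  · exact cc_eq_neg_of_modEq_thirty_sub (by decide)
  · exact cc_eq_of_modEq_neg (by decide)
  · exact cc_eq_neg_of_modEq_add_thirty (by decide)

lemma coxeter_five_add_coxeter_neg_five : coxeter 5 + coxeter (-5) = 1 := by
  have h : (1 : Fin 4 → ℂ) = framed 1 1 := by ext i; simp [framed]
  rw [h]
  refine coxeter_add_coxeter_neg fun i => Eq.trans ?_ cc_ten
  fin_cases i
  · rfl
  · exact cc_eq_of_modEq_neg (by decide)
  · exact cc_eq_of_modEq (by decide)
  · exact cc_eq_of_modEq (by decide)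

lemma coxeter_six_add_coxeter_neg_six :
    coxeter 6 + coxeter (-6) = framed 1 ![τ - 1, τ - 1, -τ, -τ] := by
  refine coxeter_add_coxeter_neg fun i => ?_
  rw [← cc_twelve, ← cc_six]
  fin_cases i
  · rfl
  · exact cc_eq_of_modEq (by decide)
  · exact cc_eq_neg_of_modEq_thirty_sub (by decide)
  · exact cc_eq_neg_of_modEq_add_thirty (by decide)

lemma coxeter_add_five (k : ℤ) : coxeter (k + 5) = coxeter k - coxeter (k - 5) := by
  rw [sub_eq_add_neg k, coxeter_add, coxeter_add]
  linear_combination coxeter k * coxeter_five_add_coxeter_neg_five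

lemma coxeter_twelve_add_coxeter_neg_twelve :
    coxeter 12 + coxeter (-12) = -1 - (coxeter 6 + coxeter (-6)) := by
  have hquad : (coxeter 6 + coxeter (-6)) ^ 2 + (coxeter 6 + coxeter (-6)) = 1 := by
    rw [coxeter_six_add_coxeter_neg_six]
    ext i
    simp only [Pi.add_apply, Pi.pow_apply, framed, Pi.one_apply, one_mul]
    norm_cast
    have hτ : (τ - 1) ^ 2 + (τ - 1) = 1 := by linear_combination τ_sq
    have hτ' : (-τ) ^ 2 + -τ = 1 := by linear_combination τ_sq
    fin_cases i
    exacts [hτ, hτ, hτ', hτ']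
  have h12 : coxeter 12 = coxeter 6 * coxeter 6 := coxeter_add 6 6
  have h12' : coxeter (-12) = coxeter (-6) * coxeter (-6) := by
    rw [← coxeter_add]
    norm_num
  have hinv : coxeter 6 * coxeter (-6) = 1 := by rw [← coxeter_add, add_neg_cancel, coxeter_zero]
  rw [h12, h12']
  linear_combination hquad - 2 * hinv

/-! ### The eight orbits -/

/-- The frame in which `A 0`, `D 0`, `E 0` and `H 0` have real coordinates. -/
def frameA : Fin 4 → ℂ := ![1, 1, ω, ω]

/-- The frame in which `B 0`, `C 0`, `F 0` and `G 0` have real coordinates. -/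
def frameB : Fin 4 → ℂ := ![ω ^ 29, ω ^ 19, ω ^ 24, ω ^ 18]

lemma norm_frameA (i : Fin 4) : ‖frameA i‖ = 1 := by
  fin_cases i <;> simp [frameA, norm_ω]

lemma norm_frameB (i : Fin 4) : ‖frameB i‖ = 1 := by
  fin_cases i <;> simp [frameB, norm_ω]

lemma coxeter_mul_framed_frameA (n : ℕ) (x y z w : ℝ) :
    coxeter n * framed frameA ![x, y, z, w] =
      ![x * ω ^ (2 * n), y * ω ^ (22 * n), z * ω ^ (14 * n + 1), w * ω ^ (26 * n + 1)] := by
  ext i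
  fin_cases i <;>
    simp only [Pi.mul_apply, coxeter, coxeterExponent, framed, frameA, Fin.zero_eta, Fin.mk_one,
      Fin.reduceFinMk, Matrix.cons_val, mul_one, one_mul, zpow_mul, zpow_ofNat, zpow_natCast] <;>
    ring

lemma coxeter_mul_framed_frameB (n : ℕ) (x y z w : ℝ) :
    coxeter n * framed frameB ![x, y, z, w] =
      ![x * ω ^ (2 * n + 29), y * ω ^ (22 * n + 19), z * ω ^ (14 * n + 24),
        w * ω ^ (26 * n + 18)] := by
  ext i
  fin_cases i <;>
    simp only [Pi.mul_apply, coxeter, coxeterExponent, framed, frameB, Fin.zero_eta, Fin.mk_one,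
      Fin.reduceFinMk, Matrix.cons_val, mul_one, zpow_mul, zpow_ofNat, zpow_natCast] <;>
    ring

lemma A_zero_eq_framed : A 0 = framed frameA ![r1, r4, r6, r7] := by
  ext i
  fin_cases i <;> simp [A, framed, frameA, mul_comm]

lemma B_zero_eq_framed : B 0 = framed frameB ![r2, r3, -r8, -r5] := by
  ext i
  fin_cases i <;> simp [B, framed, frameB, mul_comm]

lemma C_zero_eq_framed : C 0 = framed frameB ![r3, -r2, r5, -r8] := by
  ext i
  fin_cases i <;> simp [C, framed, frameB, mul_comm]

lemma D_zero_eq_framed : D 0 = framed frameA ![r4, -r1, r7, -r6] := by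
  ext i
  fin_cases i <;> simp [D, framed, frameA, mul_comm]

lemma E_zero_eq_framed : E 0 = framed frameA ![r5, r8, -r2, -r3] := by
  ext i
  fin_cases i <;> simp [E, framed, frameA, mul_comm]

lemma F_zero_eq_framed : F 0 = framed frameB ![r6, r7, r4, r1] := by
  ext i
  fin_cases i <;> simp [F, framed, frameB, mul_comm]

lemma G_zero_eq_framed : G 0 = framed frameB ![r7, -r6, -r1, r4] := by
  ext i
  fin_cases i <;> simp [G, framed, frameB, mul_comm]

lemma H_zero_eq_framed : H 0 = framed frameA ![r8, -r5, -r3, r2] := by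
  ext i
  fin_cases i <;> simp [H, framed, frameA, mul_comm]

lemma frameB_apply (i : Fin 4) : frameB i = -(ω ^ (-coxeterExponent i) * frameA i) := by
  fin_cases i
  · change ω ^ 29 = -(ω ^ (-1 : ℤ) * 1)
    rw [mul_one]
    exact ω_pow_eq_neg_zpow (by norm_num)
  · change ω ^ 19 = -(ω ^ (-11 : ℤ) * 1)
    rw [mul_one]
    exact ω_pow_eq_neg_zpow (by norm_num)
  · change ω ^ 24 = -(ω ^ (-7 : ℤ) * ω)
    rw [← zpow_add_one₀ ω_ne_zero]
    exact ω_pow_eq_neg_zpow (by norm_num)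
  · change ω ^ 18 = -(ω ^ (-13 : ℤ) * ω)
    rw [← zpow_add_one₀ ω_ne_zero]
    exact ω_pow_eq_neg_zpow (by norm_num)

lemma B_zero_eq_mul_A_zero : B 0 = -(coxeter 5 + coxeter (-6)) * A 0 := by
  -- `ω^(10e) + ω^(-12e) = cc (11e) ω^(-e)`, and the phase `-ω^(-e)` turns `frameA` into `frameB`.
  have hcc (i : Fin 4) : cc (coxeterExponent i * 11) * ![r1, r4, r6, r7] i =
      ![r2, r3, -r8, -r5] i := by
    fin_cases i
    · change cc 11 * (a / cc 9) = b / cc 9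
      rw [b_eq_cc_eleven_mul_a, mul_div_assoc]
    · change cc 121 * (d / cc 9) = c / cc 9
      rw [c_eq_cc_one_mul_d, mul_div_assoc, cc_eq_of_modEq (show 121 ≡ 1 [ZMOD 60] by decide)]
    · change cc 77 * (b / cc 3) = -(d / cc 3)
      rw [d_eq_cc_thirteen_mul_b, mul_div_assoc, ← neg_mul,
        cc_eq_neg_of_modEq_thirty_sub (show 77 ≡ 30 - 13 [ZMOD 60] by decide)]
    · change cc 143 * (c / cc 3) = -(a / cc 3)
      rw [a_eq_cc_seven_mul_c, mul_div_assoc, ← neg_mul,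
        cc_eq_neg_of_modEq_thirty_sub (show 143 ≡ 30 - 7 [ZMOD 60] by decide)]
  ext i
  rw [A_zero_eq_framed, B_zero_eq_framed, Pi.mul_apply, Pi.neg_apply, Pi.add_apply,
    coxeter_add_coxeter_apply, framed, framed, frameB_apply, ← hcc]
  push_cast
  ring_nf

lemma C_zero_eq_mul_B_zero_sub : C 0 = (coxeter 2 + coxeter (-2)) * B 0 - B 0 := by
  rw [coxeter_two_add_coxeter_neg_two, B_zero_eq_framed, framed_one_mul_framed,
    C_zero_eq_framed, ← framed_sub]
  congr 1
  ext i
  fin_cases i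
  · change c / cc 9 = cc 4 * (b / cc 9) - b / cc 9
    linear_combination c_eq_mul_b / cc 9
  · change -(b / cc 9) = -cc 14 * (c / cc 9) - c / cc 9
    linear_combination -b_eq_mul_c / cc 9
  · change a / cc 3 = -cc 2 * -(d / cc 3) - -(d / cc 3)
    linear_combination a_eq_mul_d / cc 3
  · change -(d / cc 3) = cc 8 * -(a / cc 3) - -(a / cc 3)
    linear_combination -d_eq_mul_a / cc 3

lemma D_zero_eq_mul_A_zero_sub : D 0 = (coxeter 4 + coxeter (-4)) * A 0 - A 0 := by
  rw [coxeter_four_add_coxeter_neg_four, A_zero_eq_framed, framed_one_mul_framed,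
    D_zero_eq_framed, ← framed_sub]
  congr 1
  ext i
  fin_cases i
  · change d / cc 9 = cc 8 * (a / cc 9) - a / cc 9
    linear_combination d_eq_mul_a / cc 9
  · change -(a / cc 9) = -cc 2 * (d / cc 9) - d / cc 9
    linear_combination -a_eq_mul_d / cc 9
  · change c / cc 3 = cc 4 * (b / cc 3) - b / cc 3
    linear_combination c_eq_mul_b / cc 3
  · change -(b / cc 3) = -cc 14 * (c / cc 3) - c / cc 3
    linear_combination -b_eq_mul_c / cc 3

lemma coxeter_six_add_coxeter_neg_six_mul_framed (z : Fin 4 → ℂ) (p q s t : ℝ) :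
    (coxeter 6 + coxeter (-6)) * framed z ![p / cc 9, q / cc 9, s / cc 3, t / cc 3] =
      framed z ![p / cc 3, q / cc 3, -(s / cc 9), -(t / cc 9)] := by
  rw [coxeter_six_add_coxeter_neg_six, framed_one_mul_framed]
  congr 1
  ext i
  fin_cases i
  · exact (div_cc_three p).symm
  · exact (div_cc_three q).symm
  · simp [div_cc_nine s]
  · simp [div_cc_nine t]

lemma E_zero_eq_mul_A_zero : E 0 = (coxeter 6 + coxeter (-6)) * A 0 := by
  rw [A_zero_eq_framed, E_zero_eq_framed]
  exact (coxeter_six_add_coxeter_neg_six_mul_framed frameA a d b c).symm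

lemma F_zero_eq_mul_B_zero : F 0 = (coxeter 6 + coxeter (-6)) * B 0 := by
  have h := coxeter_six_add_coxeter_neg_six_mul_framed frameB b c (-d) (-a)
  rw [neg_div, neg_div, neg_div, neg_div, neg_neg, neg_neg] at h
  rw [B_zero_eq_framed, F_zero_eq_framed]
  exact h.symm

lemma G_zero_eq_mul_C_zero : G 0 = (coxeter 6 + coxeter (-6)) * C 0 := by
  have h := coxeter_six_add_coxeter_neg_six_mul_framed frameB c (-b) a (-d)
  rw [neg_div, neg_div, neg_div, neg_div, neg_neg] at h
  rw [C_zero_eq_framed, G_zero_eq_framed]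
  exact h.symm

lemma H_zero_eq_mul_D_zero : H 0 = (coxeter 6 + coxeter (-6)) * D 0 := by
  have h := coxeter_six_add_coxeter_neg_six_mul_framed frameA d (-a) c (-b)
  rw [neg_div, neg_div, neg_div, neg_div, neg_neg] at h
  rw [D_zero_eq_framed, H_zero_eq_framed]
  exact h.symm

lemma A_eq_coxeter_mul (n : Fin 30) : A n = coxeter (n : ℕ) * A 0 := by
  rw [A_zero_eq_framed, coxeter_mul_framed_frameA, A]

lemma B_eq_coxeter_mul (n : Fin 30) : B n = coxeter (n : ℕ) * B 0 := by
  rw [B_zero_eq_framed, coxeter_mul_framed_frameB]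
  simp only [B, ofReal_neg, neg_mul]

lemma C_eq_coxeter_mul (n : Fin 30) : C n = coxeter (n : ℕ) * C 0 := by
  rw [C_zero_eq_framed, coxeter_mul_framed_frameB]
  simp only [C, ofReal_neg, neg_mul]

lemma D_eq_coxeter_mul (n : Fin 30) : D n = coxeter (n : ℕ) * D 0 := by
  rw [D_zero_eq_framed, coxeter_mul_framed_frameA]
  simp only [D, ofReal_neg, neg_mul]

lemma E_eq_coxeter_mul (n : Fin 30) : E n = coxeter (n : ℕ) * E 0 := by
  rw [E_zero_eq_framed, coxeter_mul_framed_frameA]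
  simp only [E, ofReal_neg, neg_mul]

lemma F_eq_coxeter_mul (n : Fin 30) : F n = coxeter (n : ℕ) * F 0 := by
  rw [F_zero_eq_framed, coxeter_mul_framed_frameB, F]

lemma G_eq_coxeter_mul (n : Fin 30) : G n = coxeter (n : ℕ) * G 0 := by
  rw [G_zero_eq_framed, coxeter_mul_framed_frameB]
  simp only [G, ofReal_neg, neg_mul]

lemma H_eq_coxeter_mul (n : Fin 30) : H n = coxeter (n : ℕ) * H 0 := by
  rw [H_zero_eq_framed, coxeter_mul_framed_frameA]
  simp only [H, ofReal_neg, neg_mul]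

/-- Representatives of the eight orbits of the Coxeter element on `S`. -/
def seeds : Set (Fin 4 → ℂ) := {A 0, B 0, C 0, D 0, E 0, F 0, G 0, H 0}

lemma exists_coxeter_mul_eq_of_mem_S {v : Fin 4 → ℂ} (hv : v ∈ S) :
    ∃ k : ℤ, ∃ u ∈ seeds, coxeter k * u = v := by
  obtain ⟨n, h⟩ := hv
  refine ⟨n, ?_⟩
  rcases h with rfl | rfl | rfl | rfl | rfl | rfl | rfl | rfl
  · exact ⟨A 0, by simp [seeds], (A_eq_coxeter_mul n).symm⟩
  · exact ⟨B 0, by simp [seeds], (B_eq_coxeter_mul n).symm⟩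
  · exact ⟨C 0, by simp [seeds], (C_eq_coxeter_mul n).symm⟩
  · exact ⟨D 0, by simp [seeds], (D_eq_coxeter_mul n).symm⟩
  · exact ⟨E 0, by simp [seeds], (E_eq_coxeter_mul n).symm⟩
  · exact ⟨F 0, by simp [seeds], (F_eq_coxeter_mul n).symm⟩
  · exact ⟨G 0, by simp [seeds], (G_eq_coxeter_mul n).symm⟩
  · exact ⟨H 0, by simp [seeds], (H_eq_coxeter_mul n).symm⟩

lemma r1_sq_add_r4_sq_add_r6_sq_add_r7_sq : r1 ^ 2 + r4 ^ 2 + r6 ^ 2 + r7 ^ 2 = 1 := by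
  rw [r1, r4, r6, r7, ← inv_cc_nine_sq_add_inv_cc_three_sq]
  linear_combination (cc 9 ^ 2)⁻¹ * a_sq_add_d_sq + (cc 3 ^ 2)⁻¹ * b_sq_add_c_sq

lemma r2_sq_add_r3_sq_add_r5_sq_add_r8_sq : r2 ^ 2 + r3 ^ 2 + r5 ^ 2 + r8 ^ 2 = 1 := by
  rw [r2, r3, r5, r8, ← inv_cc_nine_sq_add_inv_cc_three_sq]
  linear_combination (cc 9 ^ 2)⁻¹ * b_sq_add_c_sq + (cc 3 ^ 2)⁻¹ * a_sq_add_d_sq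

lemma rinner_A_zero_A_zero : rinner (A 0) (A 0) = 1 := by
  rw [A_zero_eq_framed, rinner_framed_self norm_frameA, r1_sq_add_r4_sq_add_r6_sq_add_r7_sq]

lemma rinner_D_zero_A_zero : rinner (D 0) (A 0) = 0 := by
  rw [D_zero_eq_framed, A_zero_eq_framed, rinner_framed norm_frameA, Fin.sum_univ_four]
  change r4 * r1 + -r1 * r4 + r7 * r6 + -r6 * r7 = 0
  ring

lemma rinner_E_zero_A_zero : rinner (E 0) (A 0) = 0 := by
  rw [E_zero_eq_framed, A_zero_eq_framed, rinner_framed norm_frameA, Fin.sum_univ_four]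
  change a / cc 3 * (a / cc 9) + d / cc 3 * (d / cc 9) + -(b / cc 9) * (b / cc 3) +
    -(c / cc 9) * (c / cc 3) = 0
  linear_combination (cc 3 * cc 9)⁻¹ * (a_sq_add_d_sq - b_sq_add_c_sq)

lemma rinner_H_zero_A_zero : rinner (H 0) (A 0) = 0 := by
  rw [H_zero_eq_framed, A_zero_eq_framed, rinner_framed norm_frameA, Fin.sum_univ_four]
  change d / cc 3 * (a / cc 9) + -(a / cc 3) * (d / cc 9) + -(c / cc 9) * (b / cc 3) +
    b / cc 9 * (c / cc 3) = 0
  ring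

lemma rinner_self_of_mem_seeds {u : Fin 4 → ℂ} (hu : u ∈ seeds) : rinner u u = 1 := by
  have h1467 := r1_sq_add_r4_sq_add_r6_sq_add_r7_sq
  have h2358 := r2_sq_add_r3_sq_add_r5_sq_add_r8_sq
  rcases hu with rfl | rfl | rfl | rfl | rfl | rfl | rfl | rfl
  · exact rinner_A_zero_A_zero
  · rw [B_zero_eq_framed, rinner_framed_self norm_frameB]
    linear_combination h2358
  · rw [C_zero_eq_framed, rinner_framed_self norm_frameB]
    linear_combination h2358
  · rw [D_zero_eq_framed, rinner_framed_self norm_frameA]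
    linear_combination h1467
  · rw [E_zero_eq_framed, rinner_framed_self norm_frameA]
    linear_combination h2358
  · rw [F_zero_eq_framed, rinner_framed_self norm_frameB]
    linear_combination h1467
  · rw [G_zero_eq_framed, rinner_framed_self norm_frameB]
    linear_combination h1467
  · rw [H_zero_eq_framed, rinner_framed_self norm_frameA]
    linear_combination h2358

lemma rinner_self_of_mem_S {v : Fin 4 → ℂ} (hv : v ∈ S) : rinner v v = 1 := by
  obtain ⟨k, u, hu, rfl⟩ := exists_coxeter_mul_eq_of_mem_S hv
  rw [rinner_coxeter_mul_self, rinner_self_of_mem_seeds hu]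

/-! ### Integrality -/

/-- Twice the inner product of `A 0` with its image under the `k`-th power of the Coxeter
element. -/
def gram (k : ℤ) : ℝ := 2 * rinner (coxeter k * A 0) (A 0)

lemma gram_neg (k : ℤ) : gram (-k) = gram k := by
  rw [gram, rinner_coxeter_mul_left, neg_neg, rinner_comm, gram]

lemma gram_add_five (k : ℤ) : gram (k + 5) = gram k - gram (k - 5) := by
  rw [gram, coxeter_add_five, sub_mul, rinner_sub_left, gram, gram]
  ring

lemma gram_zero : gram 0 = 2 := by
  rw [gram, coxeter_zero, one_mul, rinner_A_zero_A_zero, mul_one]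

lemma gram_four : gram 4 = 1 := by
  have hD : gram 4 + gram (-4) - gram 0 = 2 * rinner (D 0) (A 0) := by
    simp only [gram, D_zero_eq_mul_A_zero_sub, coxeter_zero, one_mul, add_mul, rinner_add_left,
      rinner_sub_left]
    ring
  rw [gram_neg, gram_zero, rinner_D_zero_A_zero] at hD
  linarith

lemma gram_six : gram 6 = 0 := by
  have hE : gram 6 + gram (-6) = 2 * rinner (E 0) (A 0) := by
    simp only [gram, E_zero_eq_mul_A_zero, add_mul, rinner_add_left]
    ring
  rw [gram_neg, rinner_E_zero_A_zero] at hE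
  linarith

lemma gram_five : gram 5 = 1 := by
  have h : gram 5 = gram 0 - gram (-5) := gram_add_five 0
  rw [gram_neg, gram_zero] at h
  linarith

lemma gram_one : gram 1 = 1 := by
  have h : gram 6 = gram 1 - gram (-4) := gram_add_five 1
  rw [gram_neg, gram_six, gram_four] at h
  linarith

lemma gram_two : gram 2 = 1 := by
  have hH : gram 10 + gram 2 + (gram (-2) + gram (-10)) - (gram 6 + gram (-6)) =
      2 * rinner (H 0) (A 0) := by
    simp only [gram, H_zero_eq_mul_D_zero, D_zero_eq_mul_A_zero_sub, mul_sub, mul_add, add_mul,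
      ← mul_assoc, ← coxeter_add, rinner_add_left, rinner_sub_left]
    ring_nf
  have h10 : gram 10 = gram 5 - gram 0 := gram_add_five 5
  simp only [gram_neg, gram_six, rinner_H_zero_A_zero] at hH
  linarith [gram_zero, gram_five]

lemma gram_twelve : gram 12 = -1 := by
  have h : gram 12 + gram (-12) = -gram 0 - (gram 6 + gram (-6)) := by
    have hmul := congrArg (fun t => 2 * rinner (t * A 0) (A 0))
      coxeter_twelve_add_coxeter_neg_twelve
    simp only [add_mul, sub_mul, neg_mul, one_mul, rinner_add_left, rinner_sub_left,
      rinner_neg_left] at hmul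
    simp only [gram, coxeter_zero, one_mul]
    linarith
  rw [gram_neg, gram_neg, gram_zero, gram_six] at h
  linarith

lemma gram_three : gram 3 = 1 := by
  have h12 : gram 12 = gram 7 - gram 2 := gram_add_five 7
  have h7 : gram 7 = gram 2 - gram (-3) := gram_add_five 2
  rw [gram_neg] at h7
  linarith [gram_twelve, gram_two]

lemma gram_mem_range_intCast (k : ℤ) : gram k ∈ (Int.castAddHom ℝ).range := by
  have hsmall : ∀ j ∈ Set.Icc (0 : ℤ) 5, gram j ∈ (Int.castAddHom ℝ).range := by
    rintro j ⟨hlo, hhi⟩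
    interval_cases j
    · exact ⟨2, by simp [gram_zero]⟩
    · exact ⟨1, by simp [gram_one]⟩
    · exact ⟨1, by simp [gram_two]⟩
    · exact ⟨1, by simp [gram_three]⟩
    · exact ⟨1, by simp [gram_four]⟩
    · exact ⟨1, by simp [gram_five]⟩
  refine mem_addSubgroup_of_apply_add_eq_sub _ (by norm_num) gram_add_five (fun j hj => ?_) k
  obtain ⟨hlo, hhi⟩ := hj
  obtain hj | hj := le_total 0 j
  · exact hsmall j ⟨hj, by lia⟩
  · rw [← gram_neg]
    exact hsmall (-j) ⟨by lia, by lia⟩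

/-- The additive subgroup generated by the orbit of `A 0` under the Coxeter element; it is a
scaled copy of the `E₈` lattice. -/
def rootLattice : AddSubgroup (Fin 4 → ℂ) :=
  AddSubgroup.closure (Set.range fun k => coxeter k * A 0)

lemma coxeter_mul_mem_rootLattice (k : ℤ) {v : Fin 4 → ℂ} (hv : v ∈ rootLattice) :
    coxeter k * v ∈ rootLattice := by
  induction hv using AddSubgroup.closure_induction with
  | mem v hv =>
    obtain ⟨l, rfl⟩ := hv
    exact AddSubgroup.subset_closure ⟨k + l, by simp only [coxeter_add, mul_assoc]⟩
  | zero => rw [mul_zero]; exact zero_mem _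
  | add v w _ _ hv hw => rw [mul_add]; exact add_mem hv hw
  | neg v _ hv => rw [mul_neg]; exact neg_mem hv

lemma coxeter_add_coxeter_mul_mem_rootLattice (k l : ℤ) {v : Fin 4 → ℂ} (hv : v ∈ rootLattice) :
    (coxeter k + coxeter l) * v ∈ rootLattice := by
  rw [add_mul]
  exact add_mem (coxeter_mul_mem_rootLattice k hv) (coxeter_mul_mem_rootLattice l hv)

lemma exists_two_mul_rinner_eq_intCast {v w : Fin 4 → ℂ} (hv : v ∈ rootLattice)
    (hw : w ∈ rootLattice) : ∃ m : ℤ, 2 * rinner v w = m := by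
  suffices h : 2 * rinner v w ∈ (Int.castAddHom ℝ).range by
    obtain ⟨m, hm⟩ := h
    exact ⟨m, hm.symm⟩
  induction hv, hw using AddSubgroup.closure_induction₂ with
  | mem v w hv hw =>
    obtain ⟨k, rfl⟩ := hv
    obtain ⟨l, rfl⟩ := hw
    rw [rinner_coxeter_mul_coxeter_mul]
    exact gram_mem_range_intCast (k - l)
  | zero_left w _ => simp [rinner]
  | zero_right w _ => simp [rinner]
  | add_left u v w _ _ _ hu hv => rw [rinner_add_left, mul_add]; exact add_mem hu hv
  | add_right v w u _ _ _ hv hw =>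
    rw [rinner_comm, rinner_add_left, rinner_comm v, rinner_comm w, mul_add]
    exact add_mem hv hw
  | neg_left u v _ _ huv => rw [rinner_neg_left, mul_neg]; exact neg_mem huv
  | neg_right u v _ _ huv =>
    rw [rinner_comm, rinner_neg_left, rinner_comm v, mul_neg]
    exact neg_mem huv

lemma seeds_subset_rootLattice : seeds ⊆ rootLattice := by
  have hA : A 0 ∈ rootLattice := AddSubgroup.subset_closure ⟨0, by simp [coxeter_zero]⟩
  have hB : B 0 ∈ rootLattice := by
    rw [B_zero_eq_mul_A_zero, neg_mul]
    exact neg_mem (coxeter_add_coxeter_mul_mem_rootLattice 5 (-6) hA)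
  have hC : C 0 ∈ rootLattice := by
    rw [C_zero_eq_mul_B_zero_sub]
    exact sub_mem (coxeter_add_coxeter_mul_mem_rootLattice 2 (-2) hB) hB
  have hD : D 0 ∈ rootLattice := by
    rw [D_zero_eq_mul_A_zero_sub]
    exact sub_mem (coxeter_add_coxeter_mul_mem_rootLattice 4 (-4) hA) hA
  have hsix {u v : Fin 4 → ℂ} (hv : v = (coxeter 6 + coxeter (-6)) * u) (hu : u ∈ rootLattice) :
      v ∈ rootLattice := hv ▸ coxeter_add_coxeter_mul_mem_rootLattice 6 (-6) hu
  rintro u (rfl | rfl | rfl | rfl | rfl | rfl | rfl | rfl)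
  exacts [hA, hB, hC, hD, hsix E_zero_eq_mul_A_zero hA, hsix F_zero_eq_mul_B_zero hB,
    hsix G_zero_eq_mul_C_zero hC, hsix H_zero_eq_mul_D_zero hD]

lemma S_subset_rootLattice : S ⊆ rootLattice := by
  intro v hv
  obtain ⟨k, u, hu, rfl⟩ := exists_coxeter_mul_eq_of_mem_S hv
  exact coxeter_mul_mem_rootLattice k (seeds_subset_rootLattice hu)

/-- all inner products between members of S lie in {−1, −1/2, 0, 1/2, 1};
in particular twice any such inner product is an integer. -/
theorem stmt9 :
    (∀ v ∈ S, ∀ w ∈ S, rinner v w ∈ ({-1, -(1/2), 0, 1/2, 1} : Set ℝ)) ∧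
    (∀ v ∈ S, ∀ w ∈ S, ∃ m : ℤ, 2 * rinner v w = (m : ℝ)) := by
  have hintegral : ∀ v ∈ S, ∀ w ∈ S, ∃ m : ℤ, 2 * rinner v w = (m : ℝ) := fun v hv w hw =>
    exists_two_mul_rinner_eq_intCast (S_subset_rootLattice hv) (S_subset_rootLattice hw)
  refine ⟨fun v hv w hw => ?_, hintegral⟩
  obtain ⟨m, hm⟩ := hintegral v hv w hw
  have habs : |rinner v w| ≤ 1 :=
    abs_rinner_le_one (rinner_self_of_mem_S hv) (rinner_self_of_mem_S hw)
  exact mem_of_abs_le_one_of_two_mul_eq_intCast habs hm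

end Triacontagonal
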